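/- The three functions from 2×2 complex matrices to ℂ given by x ↦ Tr(x²), x ↦ Tr(x·xᵀ), and x ↦ Tr(x)² are linearly independent over ℂ. -/

import Mathlib

open Matrix

/-!
The coefficients of a linear relation are separated by evaluating it at three matrices built from
the matrix units, for `i ≠ j`: at `Eᵢⱼ` only `Tr(x xᵀ)` survives, at the symmetric traceless matrix
`Eᵢⱼ + Eⱼᵢ` both `Tr(x²)` and `Tr(x xᵀ)` equal `2`, and at `Eᵢᵢ` all three functions equal `1`.
-/

section

variable {n R : Type*} [Fintype n]

theorem trace_single_add_single_swap [DecidableEq n] [AddCommMonoid R] {i j : n} (hij : i ≠ j)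
    (a b : R) : (single i j a + single j i b).trace = 0 := by
  rw [trace_add, trace_single_eq_of_ne i j a hij, trace_single_eq_of_ne j i b hij.symm, add_zero]

theorem trace_single_add_single_swap_mul_self [DecidableEq n] [NonUnitalNonAssocSemiring R]
    {i j : n} (hij : i ≠ j) (a b : R) :
    ((single i j a + single j i b) * (single i j a + single j i b)).trace = a * b + b * a := by
  simp [add_mul, mul_add, hij, hij.symm, add_comm]

theorem linearIndependent_degree_two_invariants_general [Nontrivial n] [Ring R]
    (two_mem : (2 : R) ∈ nonZeroDivisors R) :
    LinearIndependent R
      (![fun x => (x * x).trace,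
         fun x => (x * xᵀ).trace,
         fun x => x.trace ^ 2] : Fin 3 → (Matrix n n R → R)) := by
  classical
  obtain ⟨i, j, hij⟩ := exists_pair_ne n
  rw [Fintype.linearIndependent_iff]
  intro g hg
  have relation (x : Matrix n n R) :
      g 0 * (x * x).trace + g 1 * (x * xᵀ).trace + g 2 * x.trace ^ 2 = 0 := by
    simpa [Fin.sum_univ_three] using congrFun hg x
  have coeff_one : g 1 = 0 := by
    simpa [hij, hij.symm] using relation (single i j 1)
  have coeff_zero : g 0 = 0 := by
    have h := relation (single i j 1 + single j i 1)
    rw [trace_single_add_single_swap_mul_self hij, trace_single_add_single_swap hij] at h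
    exact (mul_right_mem_nonZeroDivisors_eq_zero_iff two_mem).mp <| by
      simpa [coeff_one, one_add_one_eq_two] using h
  have coeff_two : g 2 = 0 := by
    simpa [coeff_zero, coeff_one] using relation (single i i 1)
  simp [Fin.forall_fin_succ, coeff_zero, coeff_one, coeff_two]

end

/-- The three functions `x ↦ Tr(x²)`, `x ↦ Tr(x·xᵀ)`, `x ↦ Tr(x)²` on 2×2 complex
matrices are linearly independent over ℂ. -/
theorem linearIndependent_degree_two_invariants :
    LinearIndependent ℂ
      (![fun x => (x * x).trace,
         fun x => (x * xᵀ).trace,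
         fun x => x.trace ^ 2] : Fin 3 → (Matrix (Fin 2) (Fin 2) ℂ → ℂ)) :=
  linearIndependent_degree_two_invariants_general (mem_nonZeroDivisors_of_ne_zero two_ne_zero)
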